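/- Let k ∈ [0,1) and let S be a weakly regular AG-groupoid with a left identity e. Then every (∈,∈∨q_k)-fuzzy quasi-ideal of S is an (∈,∈∨q_k)-fuzzy bi-ideal of S. -/

import Mathlib

/-- An AG-groupoid: a magma satisfying the left invertive law `(ab)c = (cb)a`. -/
def LeftInvertive (S : Type*) [Mul S] : Prop := ∀ a b c : S, a * b * c = c * b * a

/-- A fuzzy subset: a function into `[0,1]`. -/
def IsFuzzy {S : Type*} (f : S → ℝ) : Prop := ∀ x, 0 ≤ f x ∧ f x ≤ 1

/-- A weakly regular AG-groupoid: each `a` satisfies `a = (ax)(ay)` for some `x, y`. -/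
def WeaklyRegular (S : Type*) [Mul S] : Prop := ∀ a : S, ∃ x y : S, a = a * x * (a * y)

/-- The product of fuzzy subsets: `(f ∘ g)(a)` is the supremum of `min(f b, g c)` over
factorizations `a = b * c` (the empty supremum in `ℝ` is `0`). -/
noncomputable def fuzzyProd {S : Type*} [Mul S] (f g : S → ℝ) (a : S) : ℝ :=
  sSup {v : ℝ | ∃ b c : S, a = b * c ∧ v = min (f b) (g c)}

/-- The constant fuzzy subset `1`. -/
def fuzzyOne (S : Type*) : S → ℝ := fun _ => 1

/-- An `(∈,∈∨q_k)`-fuzzy left ideal of an AG-groupoid. -/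
def FuzzyLeftIdealK {S : Type*} [Mul S] (k : ℝ) (f : S → ℝ) : Prop :=
  ∀ x y : S, min (f y) ((1 - k) / 2) ≤ f (x * y)

/-- An `(∈,∈∨q_k)`-fuzzy right ideal of an AG-groupoid. -/
def FuzzyRightIdealK {S : Type*} [Mul S] (k : ℝ) (f : S → ℝ) : Prop :=
  ∀ x y : S, min (f x) ((1 - k) / 2) ≤ f (x * y)

/-- An `(∈,∈∨q_k)`-fuzzy generalized bi-ideal of an AG-groupoid. -/
def FuzzyGenBiIdealK {S : Type*} [Mul S] (k : ℝ) (f : S → ℝ) : Prop :=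
  ∀ x y z : S, min (min (f x) (f z)) ((1 - k) / 2) ≤ f (x * y * z)

/-- An `(∈,∈∨q_k)`-fuzzy bi-ideal of an AG-groupoid. -/
def FuzzyBiIdealK {S : Type*} [Mul S] (k : ℝ) (f : S → ℝ) : Prop :=
  (∀ x y : S, min (min (f x) (f y)) ((1 - k) / 2) ≤ f (x * y)) ∧
  FuzzyGenBiIdealK k f

/-- An `(∈,∈∨q_k)`-fuzzy quasi-ideal of an AG-groupoid. -/
def FuzzyQuasiIdealK {S : Type*} [Mul S] (k : ℝ) (f : S → ℝ) : Prop :=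
  ∀ x : S,
    min (min (fuzzyProd f (fuzzyOne S) x) (fuzzyProd (fuzzyOne S) f x)) ((1 - k) / 2) ≤ f x

/-- `f_k`. -/
noncomputable def subK {S : Type*} (k : ℝ) (f : S → ℝ) : S → ℝ := fun a => min (f a) ((1 - k) / 2)

/-- `f ∧_k g`. -/
noncomputable def andK {S : Type*} (k : ℝ) (f g : S → ℝ) : S → ℝ :=
  fun a => min (min (f a) (g a)) ((1 - k) / 2)

/-- `f ∘_k g`. -/
noncomputable def prodK {S : Type*} [Mul S] (k : ℝ) (f g : S → ℝ) : S → ℝ :=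
  fun a => min (fuzzyProd f g a) ((1 - k) / 2)

/-- A regular AG-groupoid: each `a` satisfies `a = (ax)a` for some `x`. -/
def RegularAG (S : Type*) [Mul S] : Prop := ∀ a : S, ∃ x : S, a = a * x * a

/-- An intra-regular AG-groupoid: each `a` satisfies `a = (x(aa))y` for some `x, y`. -/
def IntraRegularAG (S : Type*) [Mul S] : Prop :=
  ∀ a : S, ∃ x y : S, a = x * (a * a) * y

/-!
A quasi-ideal `Q` satisfies `QS ∩ SQ ⊆ Q`, and the fuzzy version says that `f` is large at any
element that factors both as `x * w` and as `v * y` with `f x` and `f y` large. For `x * y` this is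
immediate. For `(xy)z` it remains to find a factorization with left factor `x`: left-commutativity
turns `x = (xa)(xb)` into `x = xw` with `w = (xa)b`, whence `(xy)z = (zy)x = (zy)(xw) = x((zy)w)`.
-/

section Algebra

variable {S : Type*} [Mul S]

theorem LeftInvertive.mul_mul_mul_comm (hS : LeftInvertive S) (a b c d : S) :
    a * b * (c * d) = a * c * (b * d) := by
  rw [hS a b (c * d), hS c d b, hS (b * d) c a]

theorem LeftInvertive.mul_left_comm (hS : LeftInvertive S) {e : S} (he : ∀ x : S, e * x = x)
    (a b c : S) : a * (b * c) = b * (a * c) := by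
  simpa only [he] using hS.mul_mul_mul_comm e a b c

theorem WeaklyRegular.exists_mul_eq_self (hwr : WeaklyRegular S)
    (hcomm : ∀ a b c : S, a * (b * c) = b * (a * c)) (a : S) : ∃ w, a * w = a := by
  obtain ⟨x, y, ha⟩ := hwr a
  exact ⟨a * x * y, (hcomm a (a * x) y).trans ha.symm⟩

theorem LeftInvertive.mul_mul_eq_mul_of_mul_eq_self (hS : LeftInvertive S)
    (hcomm : ∀ a b c : S, a * (b * c) = b * (a * c)) {x w : S} (hw : x * w = x) (y z : S) :
    x * y * z = x * (z * y * w) :=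
  calc
    x * y * z = z * y * x := hS x y z
    _ = z * y * (x * w) := by rw [hw]
    _ = x * (z * y * w) := hcomm (z * y) x w

end Algebra

section Fuzzy

variable {S : Type*} [Mul S] {k : ℝ} {f : S → ℝ}

theorem min_le_fuzzyProd_mul (hf : BddAbove (Set.range f)) (g : S → ℝ) (b c : S) :
    min (f b) (g c) ≤ fuzzyProd f g (b * c) := by
  obtain ⟨M, hM⟩ := hf
  refine le_csSup ⟨M, ?_⟩ ⟨b, c, rfl, rfl⟩
  rintro _ ⟨b', c', -, rfl⟩
  exact (min_le_left _ _).trans (hM ⟨b', rfl⟩)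

theorem le_fuzzyProd_fuzzyOne_right (hf : f ≤ fuzzyOne S) (x w : S) :
    f x ≤ fuzzyProd f (fuzzyOne S) (x * w) := by
  have hbdd : BddAbove (Set.range f) := ⟨1, Set.forall_mem_range.2 hf⟩
  exact (le_min le_rfl (hf x)).trans (min_le_fuzzyProd_mul hbdd (fuzzyOne S) x w)

theorem le_fuzzyProd_fuzzyOne_left (hf : f ≤ fuzzyOne S) (v y : S) :
    f y ≤ fuzzyProd (fuzzyOne S) f (v * y) := by
  have hbdd : BddAbove (Set.range (fuzzyOne S)) := ⟨1, Set.forall_mem_range.2 fun _ => le_rfl⟩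
  exact (le_min (hf y) le_rfl).trans (min_le_fuzzyProd_mul hbdd f v y)

theorem FuzzyQuasiIdealK.min_le_of_mul_eq_mul (hq : FuzzyQuasiIdealK k f) (hf : f ≤ fuzzyOne S)
    {x y v w : S} (h : v * y = x * w) :
    min (min (f x) (f y)) ((1 - k) / 2) ≤ f (v * y) := by
  have hleft : f x ≤ fuzzyProd f (fuzzyOne S) (v * y) := h ▸ le_fuzzyProd_fuzzyOne_right hf x w
  have hright : f y ≤ fuzzyProd (fuzzyOne S) f (v * y) := le_fuzzyProd_fuzzyOne_left hf v y
  exact (min_le_min_right _ (min_le_min hleft hright)).trans (hq (v * y))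

end Fuzzy

theorem quasiIdealK_is_biIdealK_general {S : Type*} [Mul S] (hS : LeftInvertive S)
    (hcomm : ∀ a b c : S, a * (b * c) = b * (a * c)) (hself : ∀ a : S, ∃ w, a * w = a)
    {k : ℝ} {f : S → ℝ} (hf : IsFuzzy f) (hq : FuzzyQuasiIdealK k f) :
    FuzzyBiIdealK k f := by
  have hf_le : f ≤ fuzzyOne S := fun x => (hf x).2
  refine ⟨fun x y => hq.min_le_of_mul_eq_mul hf_le rfl, fun x y z => ?_⟩
  obtain ⟨w, hw⟩ := hself x
  exact hq.min_le_of_mul_eq_mul hf_le (hS.mul_mul_eq_mul_of_mul_eq_self hcomm hw y z)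

/-- in a weakly regular AG-groupoid with left identity, every
`(∈,∈∨q_k)`-fuzzy quasi-ideal is an `(∈,∈∨q_k)`-fuzzy bi-ideal. -/
theorem quasiIdealK_is_biIdealK {S : Type*} [Mul S] (hS : LeftInvertive S)
    (k : ℝ) (hk0 : 0 ≤ k) (hk1 : k < 1)
    (e : S) (he : ∀ x : S, e * x = x) (hwr : WeaklyRegular S) :
    ∀ f : S → ℝ, IsFuzzy f → FuzzyQuasiIdealK k f → FuzzyBiIdealK k f := by
  have hcomm := hS.mul_left_comm he
  exact fun _ => quasiIdealK_is_biIdealK_general hS hcomm (hwr.exists_mul_eq_self hcomm)
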